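/- arXiv:2204.00077 — 4 statements merged into one kernel-verified Lean document; each statement's English description precedes it below -/
import Mathlib

section
/- Let M be a d×d real symmetric positive semidefinite matrix and let c ≥ 0. Over all matrices U ∈ ℝ^{d×d} satisfying U·Uᵀ = M, the quantity Σ_{i=1}^{d} log(1 + c·‖U_i‖₂²) attains its minimum, and the minimum value equals log det(I + c·M). Equivalently, −log det(I + c·M) = max over {U : U·Uᵀ = M} of −Σ_i log(1 + c·‖U_i‖₂²). -/
/-!
By the Weinstein–Aronszajn identity, `det (1 + c V Vᴴ) = det (1 + c Vᴴ V)`, and the diagonal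
entries of `1 + c Vᴴ V` are exactly `1 + c ‖V_i‖²`, so the lower bound is Hadamard's inequality.
Hadamard's inequality follows by rescaling to unit diagonal and bounding the eigenvalues by
`μ ≤ exp (μ - 1)`, since then the exponents `μ - 1` sum to `0`. Equality holds when `Vᴴ V` is
diagonal, which the spectral theorem achieves.
-/

open Matrix BigOperators

section

open scoped ComplexOrder

variable {𝕜 m n : Type*} [RCLike 𝕜]

theorem posDef_one_add_smul [DecidableEq n] {A : Matrix n n 𝕜} (hA : A.PosSemidef) {c : ℝ}
    (hc : 0 ≤ c) : (1 + c • A).PosDef :=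
  PosDef.one.add_posSemidef (hA.smul hc)

variable [Fintype n]

theorem det_le_exp_re_trace_sub_card_of_posSemidef [DecidableEq n] {A : Matrix n n 𝕜}
    (hA : A.PosSemidef) :
    A.det ≤ (Real.exp (RCLike.re A.trace - Fintype.card n) : 𝕜) := by
  have trace_eq : RCLike.re A.trace = ∑ i, hA.1.eigenvalues i := by
    rw [hA.1.trace_eq_sum_eigenvalues, map_sum]
    simp only [RCLike.ofReal_re]
  rw [hA.1.det_eq_prod_eigenvalues, ← RCLike.ofReal_prod, RCLike.ofReal_le_ofReal]
  calc ∏ i, hA.1.eigenvalues i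
      ≤ ∏ i, Real.exp (hA.1.eigenvalues i - 1) :=
        Finset.prod_le_prod (fun i _ => hA.eigenvalues_nonneg i) fun i _ => by
          linarith [Real.add_one_le_exp (hA.1.eigenvalues i - 1)]
    _ = Real.exp (RCLike.re A.trace - Fintype.card n) := by
        rw [← Real.exp_sum, Finset.sum_sub_distrib, trace_eq, Fintype.card_eq_sum_ones,
          Nat.cast_sum, Nat.cast_one]

theorem det_le_one_of_posSemidef_of_diag_eq_one [DecidableEq n] {A : Matrix n n 𝕜}
    (hA : A.PosSemidef) (h : A.diag = 1) : A.det ≤ 1 := by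
  have trace_eq : A.trace = Fintype.card n := by rw [trace, h]; simp
  simpa [trace_eq] using det_le_exp_re_trace_sub_card_of_posSemidef hA

theorem exists_eq_diagonal_mul_mul_diagonal_and_diag_eq_one [DecidableEq n] {A : Matrix n n 𝕜}
    (hA : A.PosSemidef) (h : ∀ i, A i i ≠ 0) :
    ∃ (s : n → 𝕜) (B : Matrix n n 𝕜),
      A = diagonal s * B * diagonal s ∧ B.PosSemidef ∧ B.diag = 1 := by
  set s : n → 𝕜 := fun i => (√(RCLike.re (A i i)) : 𝕜) with hs
  have s_mul_self (i : n) : s i * s i = A i i := by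
    obtain ⟨re_nonneg, im_eq⟩ := RCLike.nonneg_iff.1 (hA.diag_nonneg (i := i))
    rw [hs, ← RCLike.ofReal_mul, Real.mul_self_sqrt re_nonneg]
    exact RCLike.ext (by simp) (by simp [im_eq])
  have s_ne_zero (i : n) : s i ≠ 0 := left_ne_zero_of_mul (s_mul_self i ▸ h i)
  have star_inv_s : star s⁻¹ = s⁻¹ := by ext i; simp [hs]
  refine ⟨s, diagonal s⁻¹ * A * diagonal s⁻¹, ?_, ?_, ?_⟩
  · ext i j
    simp only [mul_diagonal, diagonal_mul, Pi.inv_apply]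
    field [s_ne_zero i, s_ne_zero j]
  · simpa only [diagonal_conjTranspose, star_inv_s] using
      hA.mul_mul_conjTranspose_same (diagonal s⁻¹)
  · ext i
    simp only [diag_apply, mul_diagonal, diagonal_mul, ← s_mul_self, Pi.inv_apply, Pi.one_apply]
    field [s_ne_zero i]

/-- **Hadamard's inequality** -/
theorem det_le_prod_diag_of_posSemidef [DecidableEq n] {A : Matrix n n 𝕜} (hA : A.PosSemidef) :
    A.det ≤ ∏ i, A i i := by
  have prod_nonneg : 0 ≤ ∏ i, A i i := Finset.prod_nonneg fun i _ => hA.diag_nonneg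
  rcases eq_or_ne A.det 0 with hdet | hdet
  · rwa [hdet]
  have diag_ne_zero (i : n) : A i i ≠ 0 := (hA.posDef_iff_det_ne_zero.2 hdet).diag_pos.ne'
  obtain ⟨s, B, hAB, hB, hB_diag⟩ :=
    exists_eq_diagonal_mul_mul_diagonal_and_diag_eq_one hA diag_ne_zero
  have diag_eq (i : n) : A i i = s i * s i := by
    have B_apply_self : B i i = 1 := congrFun hB_diag i
    rw [hAB, mul_diagonal, diagonal_mul, B_apply_self, mul_one]
  calc A.det = (∏ i, A i i) * B.det := by
        simp only [diag_eq, Finset.prod_mul_distrib]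
        rw [hAB, det_mul, det_mul, det_diagonal, mul_right_comm]
    _ ≤ ∏ i, A i i :=
        mul_le_of_le_one_right prod_nonneg (det_le_one_of_posSemidef_of_diag_eq_one hB hB_diag)

theorem exists_mul_conjTranspose_eq_and_isDiag {M : Matrix n n 𝕜} (hM : M.PosSemidef) :
    ∃ U : Matrix n n 𝕜, U * Uᴴ = M ∧ (Uᴴ * U).IsDiag := by
  classical
  set Q : Matrix n n 𝕜 := (hM.1.eigenvectorUnitary : Matrix n n 𝕜)
  set S : Matrix n n 𝕜 := diagonal fun i => (√(hM.1.eigenvalues i) : 𝕜) with hS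
  have S_conjTranspose : Sᴴ = S := by simp [hS, diagonal_conjTranspose, Pi.star_def]
  have S_mul_self : S * S = diagonal (RCLike.ofReal ∘ hM.1.eigenvalues) := by
    simp only [hS, diagonal_mul_diagonal, ← RCLike.ofReal_mul,
      Real.mul_self_sqrt (hM.eigenvalues_nonneg _), Function.comp_def]
  have Q_unitary : Qᴴ * Q = 1 := Unitary.coe_star_mul_self hM.1.eigenvectorUnitary
  refine ⟨Q * S, ?_, ?_⟩
  · calc Q * S * (Q * S)ᴴ = Q * (S * S) * Qᴴ := by
          simp only [conjTranspose_mul, S_conjTranspose, Matrix.mul_assoc]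
      _ = M := by rw [S_mul_self]; exact hM.1.spectral_theorem.symm
  · have gram_eq : (Q * S)ᴴ * (Q * S) = S * S := by
      rw [conjTranspose_mul, S_conjTranspose, Matrix.mul_assoc, ← Matrix.mul_assoc Qᴴ, Q_unitary,
        Matrix.one_mul]
    rw [gram_eq, S_mul_self]
    exact isDiag_diagonal _

theorem one_add_smul_conjTranspose_mul_self_apply_self [DecidableEq m] (V : Matrix n m 𝕜) (c : ℝ)
    (i : m) :
    (1 + c • (Vᴴ * V) : Matrix m m 𝕜) i i = ((1 + c * ∑ j, ‖V j i‖ ^ 2 : ℝ) : 𝕜) := by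
  simp [Matrix.mul_apply, RCLike.conj_mul, RCLike.real_smul_eq_coe_mul]

variable [Fintype m]

theorem det_one_add_smul_mul_comm {R S : Type*} [CommRing R] [Monoid S] [DistribMulAction S R]
    [IsScalarTower S R R] [SMulCommClass S R R] [DecidableEq m] [DecidableEq n] (c : S)
    (A : Matrix m n R) (B : Matrix n m R) :
    (1 + c • (A * B)).det = (1 + c • (B * A)).det := by
  rw [← Matrix.smul_mul, det_one_add_mul_comm, Matrix.mul_smul]

theorem det_one_add_smul_mul_conjTranspose_le [DecidableEq n] {c : ℝ} (hc : 0 ≤ c)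
    (V : Matrix n m 𝕜) :
    (1 + c • (V * Vᴴ)).det ≤ ((∏ i, (1 + c * ∑ j, ‖V j i‖ ^ 2) : ℝ) : 𝕜) := by
  classical
  rw [det_one_add_smul_mul_comm, RCLike.ofReal_prod]
  simp only [← one_add_smul_conjTranspose_mul_self_apply_self]
  exact det_le_prod_diag_of_posSemidef
    (posDef_one_add_smul (posSemidef_conjTranspose_mul_self V) hc).posSemidef

theorem det_one_add_smul_mul_conjTranspose_of_isDiag [DecidableEq n] {V : Matrix n m 𝕜}
    (hV : (Vᴴ * V).IsDiag) (c : ℝ) :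
    (1 + c • (V * Vᴴ)).det = ((∏ i, (1 + c * ∑ j, ‖V j i‖ ^ 2) : ℝ) : 𝕜) := by
  classical
  have isDiag : (1 + c • (Vᴴ * V)).IsDiag := isDiag_one.add (hV.smul c)
  rw [det_one_add_smul_mul_comm, ← isDiag.diagonal_diag, det_diagonal, RCLike.ofReal_prod]
  simp only [diag_apply, one_add_smul_conjTranspose_mul_self_apply_self]

end

open scoped ComplexOrder in
theorem variational_logdet_min_general {𝕜 n : Type*} [RCLike 𝕜] [Fintype n] [DecidableEq n]
    {M : Matrix n n 𝕜} (hM : M.PosSemidef) {c : ℝ} (hc : 0 ≤ c) :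
    ∃ U : Matrix n n 𝕜, U * Uᴴ = M ∧
      ∑ i, Real.log (1 + c * ∑ j, ‖U j i‖ ^ 2) = Real.log (RCLike.re (1 + c • M).det) ∧
      ∀ {m : Type*} [Fintype m] (V : Matrix n m 𝕜), V * Vᴴ = M →
        Real.log (RCLike.re (1 + c • M).det) ≤ ∑ i, Real.log (1 + c * ∑ j, ‖V j i‖ ^ 2) := by
  obtain ⟨U, rfl, hU⟩ := exists_mul_conjTranspose_eq_and_isDiag hM
  refine ⟨U, rfl, ?_, fun {m} _ V hV => ?_⟩
  · rw [det_one_add_smul_mul_conjTranspose_of_isDiag hU, RCLike.ofReal_re,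
      Real.log_prod fun i _ => by positivity]
  · classical
    have det_pos := RCLike.pos_iff.1 (posDef_one_add_smul hM hc).det_pos
    have det_le := det_one_add_smul_mul_conjTranspose_le hc V
    rw [hV, RCLike.le_iff_re_im, RCLike.ofReal_re] at det_le
    rw [← Real.log_prod fun i _ => by positivity]
    exact Real.log_le_log det_pos.1 det_le.1

/-- Over all `U` with `U * Uᵀ = M` (for `M` PSD and `c ≥ 0`), the quantity
`∑ i, log (1 + c * ‖U_i‖₂²)` attains its minimum, and the minimum value equals
`log det (I + c • M)`.  Here `‖U_i‖₂² = ∑ j, (U j i)^2` is the squared Euclidean norm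
of the `i`-th column of `U`. -/
theorem variational_logdet_min (d : ℕ) (M : Matrix (Fin d) (Fin d) ℝ)
    (hM : M.PosSemidef) (c : ℝ) (hc : 0 ≤ c) :
    ∃ U : Matrix (Fin d) (Fin d) ℝ, U * Uᵀ = M ∧
      (∑ i, Real.log (1 + c * ∑ j, (U j i) ^ 2)) = Real.log ((1 + c • M).det) ∧
      ∀ V : Matrix (Fin d) (Fin d) ℝ, V * Vᵀ = M →
        Real.log ((1 + c • M).det) ≤ ∑ i, Real.log (1 + c * ∑ j, (V j i) ^ 2) := by
  obtain ⟨U, hU, attained, lower_bound⟩ := variational_logdet_min_general hM hc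
  simp only [conjTranspose_eq_transpose_of_trivial, Real.norm_eq_abs, sq_abs,
    RCLike.re_to_real] at hU attained lower_bound
  exact ⟨U, hU, attained, fun V => lower_bound V⟩
end

section
/- Let Z ∈ ℝ^{d×m}, let Π ∈ ℝ^{m×k} have nonnegative entries, and let c_1, …, c_k ≥ 0 be scalars. Set q = k·d. Then there exist a matrix Γ ∈ ℝ^{d×q} whose columns all have unit ℓ₂ norm and a matrix A ∈ ℝ^{q×k} with nonnegative entries such that, for every j = 1, …, k: (i) Γ·Diag(A_j)·Γᵀ = Z·Diag(Π_j)·Zᵀ, and (ii) Σ_{l=1}^{q} log(1 + c_j·A_{l,j}) = log det(I + c_j·Z·Diag(Π_j)·Zᵀ). -/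
open Matrix BigOperators

/-!
Each matrix `S j = Z Diag(Π_j) Zᵀ` is positive semidefinite, so the spectral theorem gives
`S j = U j Diag(λ j) (U j)ᴴ` with `U j` unitary and `λ j ≥ 0`. The dictionary `Γ = [U 1, …, U k]`
serves all classes at once: the `j`-th column of `A` carries `λ j` on the `j`-th block and zeros
elsewhere. The other blocks contribute `0` to `Γ Diag(A_j) Γᴴ` and `log 1 = 0` to the sum of
logarithms, while `det (1 + c • S j) = ∏ i, (1 + c * λ j i)`.
-/

section BlockDictionary

variable {κ m n R : Type*}

/-- The concatenation `[U 1, …, U k]` of a family of matrices with the same index types; the column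
`(j, i)` is the `i`-th column of `U j`. -/
def blockDictionary (U : κ → Matrix m n R) : Matrix m (κ × n) R :=
  Matrix.of fun a l => U l.1 a l.2

/-- The coefficients over a `blockDictionary` whose `j`-th column is `v j` on the `j`-th block and
zero on the other blocks. -/
def blockWeights [DecidableEq κ] [Zero R] (v : κ → n → R) : Matrix (κ × n) κ R :=
  Matrix.of fun l j => if l.1 = j then v j l.2 else 0

theorem blockWeights_nonneg [DecidableEq κ] [Zero R] [Preorder R] {v : κ → n → R}
    (hv : ∀ j i, 0 ≤ v j i) (l : κ × n) (j : κ) : 0 ≤ blockWeights v l j := by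
  rw [blockWeights, of_apply]
  split_ifs
  exacts [hv j l.2, le_rfl]

theorem sum_blockWeights [Fintype κ] [Fintype n] [DecidableEq κ] [Zero R] {M : Type*}
    [AddCommMonoid M] (v : κ → n → R) (j : κ) (f : κ × n → R → M) (hf : ∀ l, f l 0 = 0) :
    ∑ l, f l (blockWeights v l j) = ∑ i, f (j, i) (v j i) := by
  rw [Fintype.sum_prod_type, Fintype.sum_eq_single j]
  · simp only [blockWeights, of_apply, if_true]
  · intro j' hj'
    simp only [blockWeights, of_apply, if_neg hj', hf, Finset.sum_const_zero]

theorem blockDictionary_mul_diagonal_mul_conjTranspose [Fintype κ] [Fintype n] [DecidableEq κ]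
    [DecidableEq n] [Zero R] {α : Type*} [NonUnitalNonAssocSemiring α] [StarRing α]
    {φ : R → α} (hφ : φ 0 = 0) (U : κ → Matrix m n α) (v : κ → n → R) (j : κ) :
    blockDictionary U * diagonal (fun l => φ (blockWeights v l j)) * (blockDictionary U)ᴴ =
      U j * diagonal (fun i => φ (v j i)) * (U j)ᴴ := by
  ext a b
  rw [Matrix.mul_apply, Matrix.mul_apply]
  simp only [mul_diagonal, conjTranspose_apply]
  exact sum_blockWeights v j (fun l x => U l.1 a l.2 * φ x * star (U l.1 b l.2))
    fun l => by rw [hφ, mul_zero, zero_mul]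

end BlockDictionary

theorem submatrix_mul_diagonal_mul_conjTranspose {m n ι α : Type*} [Fintype n] [DecidableEq n]
    [Fintype ι] [DecidableEq ι] [NonUnitalNonAssocSemiring α] [StarRing α] (e : ι ≃ n)
    (U : Matrix m n α) (w : n → α) :
    U.submatrix id e * diagonal (fun l => w (e l)) * (U.submatrix id e)ᴴ =
      U * diagonal w * Uᴴ := by
  rw [← Function.comp_def w e, ← submatrix_diagonal_equiv w e, conjTranspose_submatrix,
    submatrix_mul_equiv, submatrix_mul_equiv, submatrix_id_id]

theorem det_one_add_smul_mul_diagonal_mul {m n R : Type*} [Fintype m] [DecidableEq m] [Fintype n]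
    [DecidableEq n] [CommRing R] {U : Matrix m n R} {V : Matrix n m R} (hVU : V * U = 1)
    (v : n → R) (c : R) :
    (1 + c • (U * diagonal v * V)).det = ∏ i, (1 + c * v i) := by
  calc (1 + c • (U * diagonal v * V)).det
      = (1 + U * (c • (diagonal v * V))).det := by rw [Matrix.mul_smul, Matrix.mul_assoc]
    _ = (1 + c • diagonal v).det := by
      rw [det_one_add_mul_comm, Matrix.smul_mul, Matrix.mul_assoc, hVU, Matrix.mul_one]
    _ = ∏ i, (1 + c * v i) := by
      rw [← diagonal_one, ← diagonal_smul, diagonal_add, det_diagonal]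
      rfl

section Spectral

open scoped ComplexOrder

variable {𝕜 n : Type*} [RCLike 𝕜] [Fintype n] [DecidableEq n] {S : Matrix n n 𝕜}

theorem sum_norm_sq_eigenvectorUnitary (hS : S.IsHermitian) (j : n) :
    ∑ i, ‖(hS.eigenvectorUnitary : Matrix n n 𝕜) i j‖ ^ 2 = 1 := by
  simp only [hS.eigenvectorUnitary_apply, ← EuclideanSpace.norm_sq_eq,
    hS.eigenvectorBasis.norm_eq_one, one_pow]

theorem eigenvectorUnitary_mul_diagonal_mul_conjTranspose (hS : S.IsHermitian) :
    (hS.eigenvectorUnitary : Matrix n n 𝕜) * diagonal (fun i => (hS.eigenvalues i : 𝕜)) *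
      (hS.eigenvectorUnitary : Matrix n n 𝕜)ᴴ = S :=
  hS.spectral_theorem.symm

theorem det_one_add_smul_eq_prod_eigenvalues (hS : S.IsHermitian) (c : ℝ) :
    (1 + c • S).det = ((∏ i, (1 + c * hS.eigenvalues i) : ℝ) : 𝕜) := by
  have hU : (hS.eigenvectorUnitary : Matrix n n 𝕜)ᴴ * (hS.eigenvectorUnitary : Matrix n n 𝕜) = 1 :=
    Unitary.coe_star_mul_self hS.eigenvectorUnitary
  conv_lhs => rw [← eigenvectorUnitary_mul_diagonal_mul_conjTranspose hS]
  rw [RCLike.real_smul_eq_coe_smul (K := 𝕜), det_one_add_smul_mul_diagonal_mul hU]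
  push_cast
  rfl

theorem log_det_one_add_smul_eq_sum (hS : S.PosSemidef) {c : ℝ} (hc : 0 ≤ c) :
    Real.log (RCLike.re (1 + c • S).det) =
      ∑ i, Real.log (1 + c * hS.isHermitian.eigenvalues i) := by
  have hpos (i : n) : 0 < 1 + c * hS.isHermitian.eigenvalues i :=
    add_pos_of_pos_of_nonneg one_pos (mul_nonneg hc (hS.eigenvalues_nonneg i))
  rw [det_one_add_smul_eq_prod_eigenvalues hS.isHermitian, RCLike.ofReal_re,
    Real.log_prod fun i _ => (hpos i).ne']

theorem exists_exact_dictionary_general {κ ι : Type*} [Finite κ] [Fintype ι] [DecidableEq ι]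
    (e : ι ≃ κ × n) {S : κ → Matrix n n 𝕜} (hS : ∀ j, (S j).PosSemidef) :
    ∃ (Γ : Matrix n ι 𝕜) (A : Matrix ι κ ℝ),
      (∀ l, ∑ i, ‖Γ i l‖ ^ 2 = 1) ∧ (∀ l j, 0 ≤ A l j) ∧
      ∀ j, Γ * diagonal (fun l => (A l j : 𝕜)) * Γᴴ = S j ∧
        ∀ c : ℝ, 0 ≤ c → ∑ l, Real.log (1 + c * A l j) =
          Real.log (RCLike.re (1 + c • S j).det) := by
  classical
  cases nonempty_fintype κ
  let U (j : κ) : Matrix n n 𝕜 := (hS j).isHermitian.eigenvectorUnitary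
  let v (j : κ) : n → ℝ := (hS j).isHermitian.eigenvalues
  let Γ : Matrix n (κ × n) 𝕜 := blockDictionary U
  let A : Matrix (κ × n) κ ℝ := blockWeights v
  refine ⟨Γ.submatrix id e, A.submatrix e id,
    fun l => sum_norm_sq_eigenvectorUnitary (hS (e l).1).isHermitian (e l).2,
    fun l => blockWeights_nonneg (fun j => (hS j).eigenvalues_nonneg) (e l),
    fun j => ⟨?_, fun c hc => ?_⟩⟩
  · calc Γ.submatrix id e * diagonal (fun l => (A (e l) j : 𝕜)) * (Γ.submatrix id e)ᴴ
        = Γ * diagonal (fun l => (A l j : 𝕜)) * Γᴴ :=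
          submatrix_mul_diagonal_mul_conjTranspose e Γ fun l => (A l j : 𝕜)
      _ = U j * diagonal (fun i => (v j i : 𝕜)) * (U j)ᴴ :=
          blockDictionary_mul_diagonal_mul_conjTranspose RCLike.ofReal_zero U v j
      _ = S j := eigenvectorUnitary_mul_diagonal_mul_conjTranspose (hS j).isHermitian
  · calc ∑ l, Real.log (1 + c * A (e l) j)
        = ∑ l, Real.log (1 + c * A l j) := e.sum_comp fun l => Real.log (1 + c * A l j)
      _ = ∑ i, Real.log (1 + c * v j i) :=
          sum_blockWeights v j (fun _ x => Real.log (1 + c * x)) fun _ => by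
            rw [mul_zero, add_zero, Real.log_one]
      _ = Real.log (RCLike.re (1 + c • S j).det) := (log_det_one_add_smul_eq_sum (hS j) hc).symm

end Spectral

/-- With `q = k·d`, there exist a dictionary `Γ ∈ ℝ^{d×q}` with unit `ℓ₂`-norm columns and a
nonnegative matrix `A ∈ ℝ^{q×k}` such that for every class `j`:
(i) `Γ Diag(A_j) Γᵀ = Z Diag(Π_j) Zᵀ`, and
(ii) `∑_l log(1 + c_j A_{l,j}) = log det(I + c_j Z Diag(Π_j) Zᵀ)`. -/
theorem exists_exact_dictionary (d m k : ℕ) (Z : Matrix (Fin d) (Fin m) ℝ)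
    (P : Matrix (Fin m) (Fin k) ℝ) (hP : ∀ i j, 0 ≤ P i j)
    (c : Fin k → ℝ) (hc : ∀ j, 0 ≤ c j) :
    ∃ (Γ : Matrix (Fin d) (Fin (k * d)) ℝ) (A : Matrix (Fin (k * d)) (Fin k) ℝ),
      (∀ l, ∑ i, (Γ i l) ^ 2 = 1) ∧ (∀ l j, 0 ≤ A l j) ∧
      ∀ j, Γ * Matrix.diagonal (fun l => A l j) * Γᵀ =
            Z * Matrix.diagonal (fun i => P i j) * Zᵀ ∧
        ∑ l : Fin (k * d), Real.log (1 + c j * A l j) =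
          Real.log ((1 + c j • (Z * Matrix.diagonal (fun i => P i j) * Zᵀ)).det) := by
  obtain ⟨Γ, A, hΓ, hA, h⟩ := exists_exact_dictionary_general finProdFinEquiv.symm fun j =>
    (PosSemidef.diagonal fun i => hP i j).mul_mul_conjTranspose_same Z
  exact ⟨Γ, A, by simpa using hΓ, hA, fun j => ⟨(h j).1, (h j).2 (c j) (hc j)⟩⟩
end

section
/- Let Z ∈ ℝ^{d×m}, Π ∈ ℝ^{m×k}, Γ ∈ ℝ^{d×q}, and A ∈ ℝ^{q×k}. Then Σ_{j=1}^{k} ‖Z·Diag(Π_j)·Zᵀ − Γ·Diag(A_j)·Γᵀ‖_F² = ⟨Π·Πᵀ, (Zᵀ·Z)^{⊙2}⟩ − 2·⟨A·Πᵀ, (Γᵀ·Z)^{⊙2}⟩ + ⟨A·Aᵀ, (Γᵀ·Γ)^{⊙2}⟩. -/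
open Matrix BigOperators

/-!
For the Frobenius inner product `⟨M, N⟩ = trace (Mᵀ * N)`, cyclicity of the trace turns
`⟨X Diag(v) Xᵀ, Y Diag(w) Yᵀ⟩` into `vᵀ (Xᵀ Y)^{⊙2} w`. Summing over the corresponding columns
`v = B_j`, `w = C_j` gives `⟨B Cᵀ, (Xᵀ Y)^{⊙2}⟩`, and the theorem is the polarization
`‖M - N‖² = ⟨M, M⟩ - 2 ⟨N, M⟩ + ⟨N, N⟩`.
-/

lemma map_sq_eq_hadamard_self {d m R : Type*} [Monoid R] (M : Matrix d m R) :
    M.map (· ^ 2) = M ⊙ M := by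
  ext a b
  simp only [map_apply, hadamard_apply, sq]

section CommSemiring

variable {d m q k R : Type*} [Fintype d] [Fintype m] [Fintype q] [CommSemiring R]

lemma sum_sq_eq_trace_transpose_mul_self (M : Matrix d m R) :
    ∑ a, ∑ b, M a b ^ 2 = trace (Mᵀ * M) := by
  rw [trace_mul_comm, ← sum_hadamard_eq]
  simp only [hadamard_apply, sq]

lemma trace_transpose_mul_diagonal_congruence [DecidableEq m] [DecidableEq q]
    (X : Matrix d m R) (v : m → R) (Y : Matrix d q R) (w : q → R) :
    trace ((X * diagonal v * Xᵀ)ᵀ * (Y * diagonal w * Yᵀ)) =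
      v ᵥ* (Xᵀ * Y).map (· ^ 2) ⬝ᵥ w := by
  calc
    _ = trace (X * (diagonal v * (Xᵀ * Y) * diagonal w * Yᵀ)) := by
      simp only [transpose_mul, transpose_transpose, diagonal_transpose, Matrix.mul_assoc]
    _ = trace (diagonal v * (Xᵀ * Y) * (Xᵀ * Y * diagonal w)ᵀ) := by
      rw [trace_mul_comm]
      simp only [transpose_mul, transpose_transpose, diagonal_transpose, Matrix.mul_assoc]
    _ = v ᵥ* (Xᵀ * Y).map (· ^ 2) ⬝ᵥ w := by
      rw [map_sq_eq_hadamard_self, dotProduct_vecMul_hadamard]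

lemma sum_col_vecMul_dotProduct_col [Fintype k]
    (B : Matrix m k R) (H : Matrix m q R) (C : Matrix q k R) :
    ∑ j, B.col j ᵥ* H ⬝ᵥ C.col j = trace ((B * Cᵀ)ᵀ * H) := by
  calc
    _ = trace (Bᵀ * H * C) := rfl
    _ = trace ((B * Cᵀ)ᵀ * H) := by
      rw [trace_mul_comm, transpose_mul, transpose_transpose, Matrix.mul_assoc]

lemma sum_trace_transpose_mul_diagonal_congruence_col
    [Fintype k] [DecidableEq m] [DecidableEq q]
    (X : Matrix d m R) (B : Matrix m k R) (Y : Matrix d q R) (C : Matrix q k R) :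
    ∑ j, trace ((X * diagonal (B.col j) * Xᵀ)ᵀ * (Y * diagonal (C.col j) * Yᵀ)) =
      trace ((B * Cᵀ)ᵀ * (Xᵀ * Y).map (· ^ 2)) := by
  simp_rw [trace_transpose_mul_diagonal_congruence, sum_col_vecMul_dotProduct_col]

end CommSemiring

section CommRing

variable {d m q k R : Type*} [Fintype d] [Fintype m] [CommRing R]

lemma sum_sub_sq_eq_trace (M N : Matrix d m R) :
    ∑ a, ∑ b, (M - N) a b ^ 2 = trace (Mᵀ * M) - 2 * trace (Nᵀ * M) + trace (Nᵀ * N) := by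
  have trace_cross_symm : trace (Mᵀ * N) = trace (Nᵀ * M) := by
    rw [← trace_transpose, transpose_mul, transpose_transpose]
  rw [sum_sq_eq_trace_transpose_mul_self, transpose_sub, Matrix.sub_mul, Matrix.mul_sub,
    Matrix.mul_sub, trace_sub, trace_sub, trace_sub, trace_cross_symm]
  ring

theorem penalty_expansion_general [Fintype q] [Fintype k] [DecidableEq m] [DecidableEq q]
    (Z : Matrix d m R) (P : Matrix m k R) (Γ : Matrix d q R) (A : Matrix q k R) :
    ∑ j, ∑ a, ∑ b, (Z * diagonal (P.col j) * Zᵀ - Γ * diagonal (A.col j) * Γᵀ) a b ^ 2 =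
      trace ((P * Pᵀ)ᵀ * (Zᵀ * Z).map (· ^ 2))
        - 2 * trace ((A * Pᵀ)ᵀ * (Γᵀ * Z).map (· ^ 2))
        + trace ((A * Aᵀ)ᵀ * (Γᵀ * Γ).map (· ^ 2)) := by
  simp_rw [sum_sub_sq_eq_trace, Finset.sum_add_distrib, Finset.sum_sub_distrib, ← Finset.mul_sum,
    sum_trace_transpose_mul_diagonal_congruence_col]

end CommRing

/-- Expansion of the matrix-approximation penalty:
`∑_j ‖Z Diag(Π_j) Zᵀ − Γ Diag(A_j) Γᵀ‖_F²`
`= ⟨Π Πᵀ, (Zᵀ Z)^{⊙2}⟩ − 2 ⟨A Πᵀ, (Γᵀ Z)^{⊙2}⟩ + ⟨A Aᵀ, (Γᵀ Γ)^{⊙2}⟩`,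
where `‖M‖_F² = ∑ a b, (M a b)²`, `⟨X, Y⟩ = trace (Xᵀ Y)` and `X^{⊙2}` is the entrywise
square of `X`. -/
theorem penalty_expansion (d m k q : ℕ) (Z : Matrix (Fin d) (Fin m) ℝ)
    (P : Matrix (Fin m) (Fin k) ℝ) (Γ : Matrix (Fin d) (Fin q) ℝ)
    (A : Matrix (Fin q) (Fin k) ℝ) :
    ∑ j : Fin k, ∑ a : Fin d, ∑ b : Fin d,
        ((Z * Matrix.diagonal (fun i => P i j) * Zᵀ
          - Γ * Matrix.diagonal (fun l => A l j) * Γᵀ) a b) ^ 2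
    = Matrix.trace ((P * Pᵀ)ᵀ * Matrix.of fun a b => ((Zᵀ * Z) a b) ^ 2)
      - 2 * Matrix.trace ((A * Pᵀ)ᵀ * Matrix.of fun a b => ((Γᵀ * Z) a b) ^ 2)
      + Matrix.trace ((A * Aᵀ)ᵀ * Matrix.of fun a b => ((Γᵀ * Γ) a b) ^ 2) :=
  penalty_expansion_general Z P Γ A
end

section
/- Let Z ∈ ℝ^{d×m}, Π ∈ ℝ^{m×k}, and Γ ∈ ℝ^{d×q} be fixed, and define f(A) = (1/2)·Σ_{j=1}^{k} ‖Z·Diag(Π_j)·Zᵀ − Γ·Diag(A_j)·Γᵀ‖_F² for A ∈ ℝ^{q×k}. Then f is differentiable at every A, and its Fréchet derivative at A applied to a direction ΔA ∈ ℝ^{q×k} equals ⟨(Γᵀ·Γ)^{⊙2}·A − (Γᵀ·Z)^{⊙2}·Π, ΔA⟩; that is, the gradient of f with respect to A is (Γᵀ·Γ)^{⊙2}·A − (Γᵀ·Z)^{⊙2}·Π. -/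
/-!
Each column of `A` enters `f` through an affine residual `R_j = Z Diag(Π_j) Zᵀ - Γ Diag(A_j) Γᵀ`, so
the chain rule gives the derivative `-∑_j ⟨R_j, Γ Diag(ΔA_j) Γᵀ⟩`. Cyclicity of the trace turns
`⟨X Diag(u) Xᵀ, Γ Diag(v) Γᵀ⟩` into `⟨(Γᵀ X)^{⊙2} u, v⟩`; taking `X = Z` and `X = Γ` yields column
`j` of the gradient. When the right factors differ from the left ones, `X Diag(u) Yᵀ` against
`Γ Diag(v) Λᵀ`, the same computation has `(Γᵀ X) ⊙ (Λᵀ Y)` in place of the Hadamard square.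
-/

open Matrix BigOperators

attribute [local instance] Matrix.frobeniusNormedAddCommGroup Matrix.frobeniusNormedSpace

section Hadamard

variable {d e m q R : Type*}

lemma hadamard_self_eq_of_sq [Monoid R] (X : Matrix d m R) :
    X ⊙ X = of fun i j => X i j ^ 2 := by
  ext i j
  exact (sq (X i j)).symm

lemma trace_transpose_mul_eq_hadamard_mulVec_dotProduct [CommSemiring R] [Fintype d] [Fintype e]
    [Fintype m] [Fintype q] [DecidableEq m] [DecidableEq q] (X : Matrix d m R) (Y : Matrix e m R)
    (Γ : Matrix d q R) (Λ : Matrix e q R) (u : m → R) (v : q → R) :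
    trace ((X * diagonal u * Yᵀ)ᵀ * (Γ * diagonal v * Λᵀ)) =
      ((Γᵀ * X) ⊙ (Λᵀ * Y)) *ᵥ u ⬝ᵥ v := by
  calc trace ((X * diagonal u * Yᵀ)ᵀ * (Γ * diagonal v * Λᵀ))
      = trace ((Γ * diagonal v * Λᵀ)ᵀ * (X * diagonal u * Yᵀ)) := by
        rw [← trace_transpose, transpose_mul, transpose_transpose]
    _ = trace (diagonal v * (Γᵀ * X) * (Λᵀ * Y * diagonal u)ᵀ) := by
        simp only [transpose_mul, transpose_transpose, diagonal_transpose, Matrix.mul_assoc]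
        rw [trace_mul_comm]
        simp only [Matrix.mul_assoc]
    _ = ((Γᵀ * X) ⊙ (Λᵀ * Y)) *ᵥ u ⬝ᵥ v := by
        rw [← dotProduct_vecMul_hadamard, ← dotProduct_mulVec, dotProduct_comm]

end Hadamard

section FrobeniusPairing

variable {𝕜 d e : Type*} [NontriviallyNormedField 𝕜] [Fintype d] [Fintype e]

/-- The Frobenius pairing `N ↦ trace (Mᵀ * N)` with a fixed matrix `M`, as a continuous linear
functional. It is bilinear in `(M, N)`: there is no conjugation when `𝕜 = ℂ`. -/
def frobeniusPairing (M : Matrix d e 𝕜) : Matrix d e 𝕜 →L[𝕜] 𝕜 where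
  toLinearMap := traceLinearMap e 𝕜 𝕜 ∘ₗ mulLeftLinearMap e 𝕜 Mᵀ
  cont := (continuous_const.matrix_mul continuous_id).matrix_trace

lemma frobeniusPairing_apply (M N : Matrix d e 𝕜) : frobeniusPairing M N = trace (Mᵀ * N) := rfl

lemma frobeniusPairing_sub (M M' N : Matrix d e 𝕜) :
    frobeniusPairing (M - M') N = frobeniusPairing M N - frobeniusPairing M' N := by
  simp only [frobeniusPairing_apply, transpose_sub, Matrix.sub_mul, trace_sub]

lemma frobeniusPairing_eq_sum_col (M N : Matrix d e 𝕜) :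
    frobeniusPairing M N = ∑ j, M.col j ⬝ᵥ N.col j := rfl

lemma frobeniusPairing_eq_sum_entry (M N : Matrix d e 𝕜) :
    frobeniusPairing M N = ∑ a, ∑ b, M a b * N a b :=
  Finset.sum_comm

lemma hasFDerivAt_half_sum_entry_sq [NeZero (2 : 𝕜)] {E : Type*} [NormedAddCommGroup E]
    [NormedSpace 𝕜 E] {F : E → Matrix d e 𝕜} {F' : E →L[𝕜] Matrix d e 𝕜} {x : E}
    (hF : HasFDerivAt F F' x) :
    HasFDerivAt (fun y => (1 / 2) * ∑ a, ∑ b, F y a b ^ 2) (frobeniusPairing (F x) ∘L F') x := by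
  let entry (a : d) (b : e) : Matrix d e 𝕜 →L[𝕜] 𝕜 :=
    ⟨entryLinearMap 𝕜 𝕜 a b, continuous_apply_apply a b⟩
  have entry_apply (a : d) (b : e) (M : Matrix d e 𝕜) : entry a b M = M a b := rfl
  have hasFDerivAt_entry (a : d) (b : e) : HasFDerivAt (fun y => F y a b) (entry a b ∘L F') x :=
    (entry a b).hasFDerivAt.comp x hF
  have hasFDerivAt_sum_sq := HasFDerivAt.fun_sum fun a (_ : a ∈ Finset.univ) =>
    HasFDerivAt.fun_sum fun b (_ : b ∈ Finset.univ) => (hasFDerivAt_entry a b).pow 2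
  refine (hasFDerivAt_sum_sq.const_mul (1 / 2)).congr_fderiv ?_
  ext v
  simp [frobeniusPairing_eq_sum_entry, entry_apply, Finset.mul_sum, mul_assoc,
    inv_mul_cancel_left₀ (two_ne_zero : (2 : 𝕜) ≠ 0)]

end FrobeniusPairing

section ColumnModel

variable {𝕜 d e m q k : Type*} [NontriviallyNormedField 𝕜] [Fintype q] [DecidableEq q]

/-- The matrix `Γ Diag(B_j) Λᵀ` that a coefficient matrix `B` models in its `j`-th column, as a
continuous linear function of `B`. -/
def columnModel (Γ : Matrix d q 𝕜) (Λ : Matrix e q 𝕜) (j : k) :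
    Matrix q k 𝕜 →L[𝕜] Matrix d e 𝕜 where
  toFun B := Γ * diagonal (B.col j) * Λᵀ
  map_add' B C := by
    rw [← Matrix.add_mul, ← Matrix.mul_add, diagonal_add]
    rfl
  map_smul' c B := by
    rw [RingHom.id_apply, ← Matrix.smul_mul, ← Matrix.mul_smul, ← diagonal_smul]
    rfl
  cont := by
    have continuous_col : Continuous fun B : Matrix q k 𝕜 => B.col j :=
      continuous_pi fun l => continuous_apply_apply l j
    fun_prop

variable [Fintype d] [Fintype e] [Fintype m] [DecidableEq m]

lemma frobeniusPairing_columnModel_columnModel (X : Matrix d m 𝕜) (Y : Matrix e m 𝕜)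
    (Γ : Matrix d q 𝕜) (Λ : Matrix e q 𝕜) (C : Matrix m k 𝕜) (B : Matrix q k 𝕜) (j : k) :
    frobeniusPairing (columnModel X Y j C) (columnModel Γ Λ j B) =
      (((Γᵀ * X) ⊙ (Λᵀ * Y)) * C).col j ⬝ᵥ B.col j :=
  trace_transpose_mul_eq_hadamard_mulVec_dotProduct X Y Γ Λ (C.col j) (B.col j)

variable [Fintype k]

lemma sum_frobeniusPairing_sub_columnModel (Z : Matrix d m 𝕜) (W : Matrix e m 𝕜)
    (P : Matrix m k 𝕜) (Γ : Matrix d q 𝕜) (Λ : Matrix e q 𝕜) (A B : Matrix q k 𝕜) :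
    ∑ j, frobeniusPairing (columnModel Z W j P - columnModel Γ Λ j A) (-columnModel Γ Λ j B) =
      frobeniusPairing (((Γᵀ * Γ) ⊙ (Λᵀ * Λ)) * A - ((Γᵀ * Z) ⊙ (Λᵀ * W)) * P) B := by
  rw [frobeniusPairing_eq_sum_col]
  refine Finset.sum_congr rfl fun j _ => ?_
  rw [map_neg, frobeniusPairing_sub, neg_sub, frobeniusPairing_columnModel_columnModel,
    frobeniusPairing_columnModel_columnModel, ← sub_dotProduct]
  rfl

theorem gradient_wrt_A_general [NeZero (2 : 𝕜)] (Z : Matrix d m 𝕜) (W : Matrix e m 𝕜)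
    (P : Matrix m k 𝕜) (Γ : Matrix d q 𝕜) (Λ : Matrix e q 𝕜) (A : Matrix q k 𝕜) :
    HasFDerivAt
      (fun B : Matrix q k 𝕜 => (1 / 2) * ∑ j, ∑ a, ∑ b,
        (Z * diagonal (P.col j) * Wᵀ - Γ * diagonal (B.col j) * Λᵀ) a b ^ 2)
      (frobeniusPairing (((Γᵀ * Γ) ⊙ (Λᵀ * Λ)) * A - ((Γᵀ * Z) ⊙ (Λᵀ * W)) * P)) A := by
  have hasFDerivAt_residual (j : k) :
      HasFDerivAt (fun B => columnModel Z W j P - columnModel Γ Λ j B) (-columnModel Γ Λ j) A :=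
    (columnModel Γ Λ j).hasFDerivAt.const_sub _
  have hasFDerivAt_sum := HasFDerivAt.fun_sum fun j (_ : j ∈ Finset.univ) =>
    hasFDerivAt_half_sum_entry_sq (hasFDerivAt_residual j)
  simp only [← Finset.mul_sum] at hasFDerivAt_sum
  -- The Frobenius topology is the product topology only after unfolding, so the derivatives are
  -- matched by definitional equality: rewriting inside them fails.
  exact hasFDerivAt_sum.congr_fderiv <| ContinuousLinearMap.ext fun B =>
    (_root_.sum_apply _ _ _).trans (sum_frobeniusPairing_sub_columnModel Z W P Γ Λ A B)

end ColumnModel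

/-- For fixed `Z, Π, Γ`, the function
`f(A) = ½ ∑_j ‖Z Diag(Π_j) Zᵀ − Γ Diag(A_j) Γᵀ‖_F²` is (Fréchet) differentiable at every `A`,
and its derivative applied to a direction `ΔA` equals
`⟨(Γᵀ Γ)^{⊙2} A − (Γᵀ Z)^{⊙2} Π, ΔA⟩`; i.e., the gradient of `f` with respect to `A` is
`(Γᵀ Γ)^{⊙2} A − (Γᵀ Z)^{⊙2} Π`.  Here `‖M‖_F² = ∑ a b, (M a b)²`,
`⟨X, Y⟩ = trace (Xᵀ Y)` and `X^{⊙2}` is the entrywise square of `X`. -/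
theorem gradient_wrt_A (d m k q : ℕ) (Z : Matrix (Fin d) (Fin m) ℝ)
    (P : Matrix (Fin m) (Fin k) ℝ) (Γ : Matrix (Fin d) (Fin q) ℝ)
    (A : Matrix (Fin q) (Fin k) ℝ) :
    ∃ L : Matrix (Fin q) (Fin k) ℝ →L[ℝ] ℝ,
      HasFDerivAt (fun B : Matrix (Fin q) (Fin k) ℝ =>
        (1 / 2) * ∑ j : Fin k, ∑ a : Fin d, ∑ b : Fin d,
          ((Z * Matrix.diagonal (fun i => P i j) * Zᵀ
            - Γ * Matrix.diagonal (fun l => B l j) * Γᵀ) a b) ^ 2) L A ∧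
      ∀ ΔA : Matrix (Fin q) (Fin k) ℝ,
        L ΔA = Matrix.trace
          (((Matrix.of fun a b => ((Γᵀ * Γ) a b) ^ 2) * A
            - (Matrix.of fun a b => ((Γᵀ * Z) a b) ^ 2) * P)ᵀ * ΔA) := by
  refine ⟨_, gradient_wrt_A_general Z Z P Γ Γ A, fun ΔA => ?_⟩
  rw [frobeniusPairing_apply, hadamard_self_eq_of_sq, hadamard_self_eq_of_sq]
end
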